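/- Let τ > 0, ξ ∈ ℝ with |ξ| < 1, and let N : [0,τ] → ℝ be integrable, and define Δ(s) = 1 − ξ e^{−sτ} − ∫₀^τ N(ν) e^{−sν} dν. Then Δ has only finitely many roots on the imaginary axis, i.e., the set {ω ∈ ℝ : Δ(iω) = 0} is finite. -/

import Mathlib

/-!
On the imaginary axis the integral term is a Fourier transform of an integrable function, so it
tends to zero at infinity by the Riemann–Lebesgue lemma, whereas
`‖1 - ξ exp (-iωτ)‖ ≥ 1 - |ξ| > 0`. Hence the imaginary roots lie in a compact set. Since `Δ` is
entire (`differentiable_laplace`) and not identically zero, its zeros cannot accumulate, and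
a compact set contains only finitely many of them.
-/

open MeasureTheory Complex

open Filter Topology

/-- The Laplace transform of an integrable function on a bounded interval is entire: the
derivative may be taken under the integral sign. -/
lemma differentiable_laplace {τ : ℝ} (hτ : 0 < τ) {N : ℝ → ℝ}
    (hN : IntervalIntegrable N volume 0 τ) :
    Differentiable ℂ
      (fun s : ℂ => ∫ ν in (0:ℝ)..τ, (N ν : ℂ) * Complex.exp (-s * ν)) := by
  intro s₀
  have hN' : IntervalIntegrable (fun ν => (N ν : ℂ)) volume 0 τ :=
    ⟨hN.1.ofReal, hN.2.ofReal⟩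
  have hint : ∀ s : ℂ, IntervalIntegrable
      (fun ν : ℝ => (N ν : ℂ) * Complex.exp (-s * ν)) volume 0 τ := fun s =>
    hN'.mul_continuousOn (by fun_prop)
  have hint' : IntervalIntegrable
      (fun ν : ℝ => (N ν : ℂ) * (Complex.exp (-s₀ * ν) * (-ν))) volume 0 τ :=
    hN'.mul_continuousOn (by fun_prop)
  have key := intervalIntegral.hasDerivAt_integral_of_dominated_loc_of_deriv_le
    (μ := volume) (a := 0) (b := τ) (x₀ := s₀) (s := Metric.ball s₀ 1)
    (F := fun (s : ℂ) (ν : ℝ) => (N ν : ℂ) * Complex.exp (-s * ν))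
    (F' := fun (s : ℂ) (ν : ℝ) => (N ν : ℂ) * (Complex.exp (-s * ν) * (-ν)))
    (bound := fun ν => |N ν| * (Real.exp ((‖s₀‖ + 1) * τ) * τ))
    (Metric.ball_mem_nhds _ one_pos)
    (Eventually.of_forall fun s => (hint s).def'.aestronglyMeasurable)
    (hint s₀) hint'.def'.aestronglyMeasurable ?_ ?_ ?_
  · exact key.2.differentiableAt
  · refine Eventually.of_forall fun ν hν s hs => ?_
    rw [Set.uIoc_of_le hτ.le] at hν
    have hs1 : ‖s‖ ≤ ‖s₀‖ + 1 := by
      have h1 : ‖s - s₀‖ < 1 := by simpa [dist_eq_norm] using hs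
      have h2 : ‖s‖ ≤ ‖s₀‖ + ‖s - s₀‖ := norm_le_norm_add_norm_sub' s s₀
      linarith
    have hre : (-s * (ν : ℂ)).re ≤ (‖s₀‖ + 1) * τ := by
      calc (-s * (ν : ℂ)).re ≤ ‖-s * (ν : ℂ)‖ := Complex.re_le_norm _
        _ = ‖s‖ * ν := by rw [norm_mul, norm_neg, Complex.norm_real, Real.norm_of_nonneg hν.1.le]
        _ ≤ (‖s₀‖ + 1) * τ := by
          have := hν.1.le
          have := hν.2
          gcongr
    simp only [norm_mul, norm_neg, Complex.norm_real, Complex.norm_exp, Real.norm_eq_abs,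
      abs_of_pos hν.1]
    have := hν.1.le
    have := hν.2
    gcongr
  · exact hN.abs.mul_const _
  · refine Eventually.of_forall fun ν _ s _ => ?_
    have h : HasDerivAt (fun s : ℂ => -s * (ν : ℂ)) (-(ν : ℂ)) s := by
      simpa using (hasDerivAt_id s).neg.mul_const (ν : ℂ)
    exact h.cexp.const_mul _

/-- Riemann–Lebesgue on the imaginary axis. The factor `2 * π` of Mathlib's Fourier character is
absorbed by rescaling the frequency. -/
lemma tendsto_laplace_imag {τ : ℝ} (hτ : 0 < τ) (N : ℝ → ℝ) :
    Tendsto (fun ω : ℝ => ∫ ν in (0:ℝ)..τ, (N ν : ℂ) * Complex.exp (-(Complex.I * ω) * ν))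
      (cocompact ℝ) (𝓝 0) := by
  have h := Real.tendsto_integral_exp_smul_cocompact
    ((Set.Ioc 0 τ).indicator fun ν => (N ν : ℂ))
  have hscale : Tendsto (fun ω : ℝ => ω * (2 * Real.pi)⁻¹) (cocompact ℝ) (cocompact ℝ) :=
    (Homeomorph.mulRight₀ (2 * Real.pi)⁻¹ (by positivity)).isClosedEmbedding.tendsto_cocompact
  refine (h.comp hscale).congr fun ω => ?_
  rw [intervalIntegral.integral_of_le hτ.le, ← integral_indicator measurableSet_Ioc]
  refine integral_congr_ae (Eventually.of_forall fun ν => ?_)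
  by_cases hν : ν ∈ Set.Ioc 0 τ
  · simp only [Set.indicator_of_mem hν, Circle.smul_def, Real.fourierChar_apply, smul_eq_mul]
    rw [mul_comm]
    congr 2
    have : (Real.pi : ℂ) ≠ 0 := by exact_mod_cast Real.pi_ne_zero
    push_cast
    field_simp
  · simp [Set.indicator_of_notMem hν]

theorem stmt_3 (τ ξ : ℝ) (hτ : 0 < τ) (hξ : |ξ| < 1) (N : ℝ → ℝ)
    (hN : IntervalIntegrable N volume 0 τ)
    (Δ : ℂ → ℂ)
    (hΔ : ∀ s : ℂ, Δ s = 1 - (ξ : ℂ) * Complex.exp (-s * τ)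
      - ∫ ν in (0:ℝ)..τ, (N ν : ℂ) * Complex.exp (-s * ν)) :
    {ω : ℝ | Δ (Complex.I * ω) = 0}.Finite := by
  have hdiff : Differentiable ℂ Δ := by
    rw [funext hΔ]
    exact Differentiable.sub (by fun_prop) (differentiable_laplace hτ hN)
  have hev : ∀ᶠ ω : ℝ in cocompact ℝ, Δ (Complex.I * ω) ≠ 0 := by
    have hsmall := (tendsto_laplace_imag hτ N).norm.eventually_lt_const
      (show ‖(0 : ℂ)‖ < 1 - |ξ| by rw [norm_zero]; linarith)
    filter_upwards [hsmall] with ω hω h0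
    rw [hΔ, sub_eq_zero] at h0
    rw [← h0] at hω
    have h1 : ‖(ξ : ℂ) * Complex.exp (-(Complex.I * ω) * τ)‖ = |ξ| := by
      simp [Complex.norm_exp]
    have h2 := norm_sub_norm_le (1 : ℂ) ((ξ : ℂ) * Complex.exp (-(Complex.I * ω) * τ))
    rw [h1, norm_one] at h2
    linarith
  obtain ⟨K, hK, hKsub⟩ := mem_cocompact.1 hev
  by_contra hinf
  have hcont : Continuous fun ω : ℝ => Complex.I * (ω : ℂ) := by fun_prop
  have hinj : Function.Injective fun ω : ℝ => Complex.I * (ω : ℂ) := fun a b hab => by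
    simpa using hab
  have hinf' : ((fun ω : ℝ => Complex.I * (ω : ℂ)) '' {ω : ℝ | Δ (Complex.I * ω) = 0}).Infinite :=
    Set.Infinite.image hinj.injOn hinf
  obtain ⟨z, -, hz⟩ := hinf'.exists_accPt_of_subset_isCompact (hK.image hcont)
    (Set.image_mono fun ω hω => by
      by_contra hωK
      exact hKsub hωK hω)
  have hfreq : ∃ᶠ s in 𝓝[≠] z, Δ s = 0 := by
    refine (accPt_iff_frequently_nhdsNE.1 hz).mono ?_
    rintro _ ⟨ω, hω, rfl⟩
    exact hω
  have hzero : Set.EqOn Δ 0 Set.univ :=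
    (hdiff.differentiableOn.analyticOnNhd isOpen_univ).eqOn_zero_of_preconnected_of_frequently_eq_zero
      isPreconnected_univ (Set.mem_univ z) hfreq
  obtain ⟨ω, hω⟩ := hev.exists
  exact hω (hzero (Set.mem_univ _))
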